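/- arXiv:1810.12572 — 3 statements merged into one kernel-verified Lean document; each statement's English description precedes it below -/
import Mathlib

section
/- Under the stated assumptions on Z, V, X, R and F, for every ρ > 0 and every κ > 0 there exists a constant C_{ρ,κ} > 0 such that for all z₁, z₂ ∈ Z with ‖z₁‖_Z ≤ ρ and ‖z₂‖_Z ≤ ρ one has |⟨DF(z₁) − DF(z₂), z₁ − z₂⟩| ≤ κ‖z₁ − z₂‖_Z² + C_{ρ,κ} · min{R(z₁ − z₂), R(z₂ − z₁)} · ‖z₁ − z₂‖_𝕍. -/
/-!
On a ball, `DF` is Lipschitz with some constant `L`, so with `w = z₁ - z₂` the left-hand side is at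
most `L ‖w‖_Z ‖w‖_V`. If `‖w‖_V ≤ (κ / L) ‖w‖_Z`, this is at most `κ ‖w‖_Z²`. Otherwise the
normalized vector `w / ‖w‖_Z` lies in a compact subset of `V` that avoids `0`, on which `‖·‖_X` is
bounded below by some `m > 0`; then `‖w‖_Z ≤ ‖w‖_X / m`, and `‖·‖_X` and `‖·‖_V` are controlled by
`R` and `‖·‖_𝕍`.
-/

open Metric

theorem norm_inv_norm_smul {𝕜 E G : Type*} [RCLike 𝕜] [SeminormedAddCommGroup E]
    [SeminormedAddCommGroup G] [NormedSpace 𝕜 G] (x : E) (y : G) :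
    ‖(‖x‖ : 𝕜)⁻¹ • y‖ = ‖y‖ / ‖x‖ := by
  rw [norm_smul, norm_inv, RCLike.norm_ofReal, abs_norm, inv_mul_eq_div]

section CompactEmbedding

variable {𝕜 Z V X : Type*} [RCLike 𝕜]
  [SeminormedAddCommGroup Z] [NormedSpace 𝕜 Z]
  [NormedAddCommGroup V] [NormedSpace 𝕜 V]
  [NormedAddCommGroup X] [NormedSpace 𝕜 X]
  {j : Z →ₗ[𝕜] V} {k : V →L[𝕜] X} {ε : ℝ}

theorem exists_pos_forall_mul_norm_le_of_mul_norm_le (hj : IsCompactOperator j)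
    (hk : Function.Injective k) (hε : 0 < ε) :
    ∃ m > 0, ∀ z, ε * ‖z‖ ≤ ‖j z‖ → m * ‖z‖ ≤ ‖k (j z)‖ := by
  obtain ⟨S, hS, hjS⟩ := hj.image_closedBall_subset_compact (f := j) 1
  have hT : IsCompact (S ∩ {v | ε ≤ ‖v‖}) :=
    hS.inter_right (isClosed_le continuous_const continuous_norm)
  have hkT : ∀ v ∈ S ∩ {v | ε ≤ ‖v‖}, 0 < ‖k v‖ := fun v hv ↦
    norm_pos_iff.2 <| (map_ne_zero_iff k hk).2 <| norm_pos_iff.1 <| hε.trans_le hv.2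
  obtain ⟨m, hm, hmT⟩ := hT.exists_forall_le' k.continuous.norm.continuousOn hkT
  refine ⟨m, hm, fun z hz ↦ ?_⟩
  obtain hz₀ | hz₀ := (norm_nonneg z).eq_or_lt'
  · simp only [hz₀, mul_zero, norm_nonneg]
  set u : Z := (‖z‖ : 𝕜)⁻¹ • z with hu
  have hu_mem : u ∈ closedBall 0 1 := by
    rw [mem_closedBall_zero_iff, hu, norm_inv_norm_smul]
    exact div_self_le_one _
  have hju : ε ≤ ‖j u‖ := by rwa [hu, map_smul, norm_inv_norm_smul, le_div_iff₀ hz₀]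
  have hku : m ≤ ‖k (j u)‖ := hmT _ ⟨hjS ⟨u, hu_mem, rfl⟩, hju⟩
  rwa [hu, map_smul, map_smul, norm_inv_norm_smul, le_div_iff₀ hz₀] at hku

theorem exists_forall_norm_mul_norm_le (hj : IsCompactOperator j) (hk : Function.Injective k)
    (hε : 0 < ε) :
    ∃ K > 0, ∀ z, ‖z‖ * ‖j z‖ ≤ ε * ‖z‖ ^ 2 + K * (‖k (j z)‖ * ‖j z‖) := by
  obtain ⟨m, hm, hmk⟩ := exists_pos_forall_mul_norm_le_of_mul_norm_le hj hk hε
  refine ⟨m⁻¹, inv_pos.2 hm, fun z ↦ ?_⟩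
  obtain hz | hz := le_total ‖j z‖ (ε * ‖z‖)
  · calc ‖z‖ * ‖j z‖ ≤ ‖z‖ * (ε * ‖z‖) := by gcongr
      _ = ε * ‖z‖ ^ 2 := by ring
      _ ≤ ε * ‖z‖ ^ 2 + m⁻¹ * (‖k (j z)‖ * ‖j z‖) := le_add_of_nonneg_right (by positivity)
  · calc ‖z‖ * ‖j z‖ ≤ m⁻¹ * ‖k (j z)‖ * ‖j z‖ := by
          gcongr
          exact (le_inv_mul_iff₀ hm).2 (hmk z hz)
      _ = m⁻¹ * (‖k (j z)‖ * ‖j z‖) := mul_assoc ..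
      _ ≤ ε * ‖z‖ ^ 2 + m⁻¹ * (‖k (j z)‖ * ‖j z‖) := le_add_of_nonneg_left (by positivity)

end CompactEmbedding

theorem lipschitzOnWith_closedBall_of_norm_hasFDerivAt_le_rpow {𝕜 E G : Type*} [RCLike 𝕜]
    [NormedAddCommGroup E] [NormedSpace ℝ E] [NormedSpace 𝕜 E]
    [NormedAddCommGroup G] [NormedSpace 𝕜 G] {f : E → G} {f' : E → E →L[𝕜] G} {C q : ℝ}
    (hC : 0 ≤ C) (hq : 0 ≤ q) (hf : ∀ x, HasFDerivAt f (f' x) x)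
    (hf' : ∀ x, ‖f' x‖ ≤ C * (1 + ‖x‖ ^ q)) (ρ : ℝ) :
    LipschitzOnWith (C * (1 + ρ ^ q)).toNNReal f (closedBall 0 ρ) := by
  refine (convex_closedBall 0 ρ).lipschitzOnWith_of_nnnorm_hasFDerivWithin_le
    (fun x _ ↦ (hf x).hasFDerivWithinAt) fun x hx ↦ NNReal.le_toNNReal_of_coe_le ?_
  have hxρ : ‖x‖ ≤ ρ := mem_closedBall_zero_iff.1 hx
  calc ‖f' x‖ ≤ C * (1 + ‖x‖ ^ q) := hf' x
    _ ≤ C * (1 + ρ ^ q) := by gcongr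

theorem abs_sub_apply_le_of_lipschitzOnWith {Z V : Type*} [SeminormedAddCommGroup Z]
    [SeminormedAddCommGroup V] [NormedSpace ℝ V] {f : Z → V →L[ℝ] ℝ} {s : Set Z} {L : NNReal}
    (hf : LipschitzOnWith L f s) {z₁ z₂ : Z} (hz₁ : z₁ ∈ s) (hz₂ : z₂ ∈ s) (v : V) :
    |f z₁ v - f z₂ v| ≤ L * (‖z₁ - z₂‖ * ‖v‖) :=
  calc |f z₁ v - f z₂ v| ≤ ‖f z₁ - f z₂‖ * ‖v‖ := (f z₁ - f z₂).le_opNorm v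
    _ ≤ L * ‖z₁ - z₂‖ * ‖v‖ := by gcongr; exact hf.norm_sub_le hz₁ hz₂
    _ = L * (‖z₁ - z₂‖ * ‖v‖) := mul_assoc ..

theorem mul_norm_le_min_neg {X : Type*} [SeminormedAddCommGroup X] {R : X → ℝ} {c : ℝ}
    (hR : ∀ x, c * ‖x‖ ≤ R x) (x : X) : c * ‖x‖ ≤ min (R x) (R (-x)) :=
  le_min (hR x) (norm_neg x ▸ hR (-x))

theorem sqrt_mul_le_sqrt_of_mul_sq_le {a b t : ℝ} (ht : 0 ≤ t) (h : a * t ^ 2 ≤ b) :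
    √a * t ≤ √b :=
  calc √a * t = √(a * t ^ 2) := by rw [Real.sqrt_mul' a (sq_nonneg t), Real.sqrt_sq ht]
    _ ≤ √b := Real.sqrt_le_sqrt h

theorem stmt0_general {Z V X : Type*}
    [SeminormedAddCommGroup Z] [NormedSpace ℝ Z]
    [NormedAddCommGroup V] [NormedSpace ℝ V]
    [NormedAddCommGroup X] [NormedSpace ℝ X]
    {j : Z →ₗ[ℝ] V} (hj : IsCompactOperator j)
    {k : V →L[ℝ] X} (hk : Function.Injective k)
    {Q : V → ℝ} {γ : ℝ} (hγ : 0 < γ) (hQ : ∀ v, γ * ‖v‖ ^ 2 ≤ Q v)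
    {R : X → ℝ} {c : ℝ} (hc : 0 < c) (hR : ∀ x, c * ‖x‖ ≤ R x)
    {f : Z → V →L[ℝ] ℝ} {s : Set Z} {L : NNReal} (hf : LipschitzOnWith L f s)
    {κ : ℝ} (hκ : 0 < κ) :
    ∃ K > 0, ∀ z₁ ∈ s, ∀ z₂ ∈ s,
      |f z₁ (j (z₁ - z₂)) - f z₂ (j (z₁ - z₂))| ≤
        κ * ‖z₁ - z₂‖ ^ 2 +
          K * min (R (k (j (z₁ - z₂)))) (R (k (j (z₂ - z₁)))) * √(Q (j (z₁ - z₂))) := by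
  set M : ℝ := L + 1
  have hM : 0 < M := by positivity
  obtain ⟨K, hK, hjk⟩ := exists_forall_norm_mul_norm_le hj hk (div_pos hκ hM)
  refine ⟨M * K / (c * √γ), by positivity, fun z₁ hz₁ z₂ hz₂ ↦ ?_⟩
  rw [← neg_sub z₁ z₂, map_neg, map_neg]
  set w := z₁ - z₂
  have hRw : c * ‖k (j w)‖ ≤ min (R (k (j w))) (R (-k (j w))) := mul_norm_le_min_neg hR _
  have hQw : √γ * ‖j w‖ ≤ √(Q (j w)) := sqrt_mul_le_sqrt_of_mul_sq_le (norm_nonneg _) (hQ _)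
  have hmin : 0 ≤ min (R (k (j w))) (R (-k (j w))) := le_trans (by positivity) hRw
  calc |f z₁ (j w) - f z₂ (j w)| ≤ L * (‖w‖ * ‖j w‖) :=
        abs_sub_apply_le_of_lipschitzOnWith hf hz₁ hz₂ _
    _ ≤ M * (‖w‖ * ‖j w‖) := by gcongr; exact le_add_of_nonneg_right zero_le_one
    _ ≤ M * (κ / M * ‖w‖ ^ 2 + K * (‖k (j w)‖ * ‖j w‖)) := by gcongr; exact hjk w
    _ = κ * ‖w‖ ^ 2 + M * K / (c * √γ) * (c * ‖k (j w)‖) * (√γ * ‖j w‖) := by field_simp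
    _ ≤ κ * ‖w‖ ^ 2 +
          M * K / (c * √γ) * min (R (k (j w))) (R (-k (j w))) * √(Q (j w)) := by gcongr

/-- Interpolation estimate for the nonconvex lower order term `F`
(Lemma `lem.estDF` of the paper).  `Z, V` are separable real Hilbert spaces,
`X` a Banach space, `jZV : Z ↪ V` a compact injective embedding, `jVX : V ↪ X`
a continuous injective embedding, `VV` is the elliptic symmetric operator `𝕍`
(realized as a bilinear form), `R` the one-homogeneous bounded dissipation
potential and `F` the `C²` nonconvexity with `D²F`-growth bound. -/
theorem stmt0
    {Z V X : Type*}
    [NormedAddCommGroup Z] [InnerProductSpace ℝ Z] [CompleteSpace Z]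
    [TopologicalSpace.SeparableSpace Z]
    [NormedAddCommGroup V] [InnerProductSpace ℝ V] [CompleteSpace V]
    [TopologicalSpace.SeparableSpace V]
    [NormedAddCommGroup X] [NormedSpace ℝ X]
    (jZV : Z →L[ℝ] V) (hjZV_inj : Function.Injective jZV)
    (hjZV_cpt : IsCompactOperator jZV)
    (jVX : V →L[ℝ] X) (hjVX_inj : Function.Injective jVX)
    (VV : V →L[ℝ] V →L[ℝ] ℝ) (hVV_symm : ∀ u v : V, VV u v = VV v u)
    (γ : ℝ) (hγ : 0 < γ) (hVV_ell : ∀ v : V, γ * ‖v‖ ^ 2 ≤ VV v v)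
    (R : X → ℝ) (hR_conv : ConvexOn ℝ Set.univ R) (hR_cont : Continuous R)
    (hR_hom : ∀ t : ℝ, 0 ≤ t → ∀ x : X, R (t • x) = t * R x)
    (c C : ℝ) (hc : 0 < c) (hC : 0 < C)
    (hR_low : ∀ x : X, c * ‖x‖ ≤ R x) (hR_up : ∀ x : X, R x ≤ C * ‖x‖)
    (F : Z → ℝ) (hF_nonneg : ∀ z : Z, 0 ≤ F z)
    (DF : Z → V →L[ℝ] ℝ)
    (hDF : ∀ z : Z, HasFDerivAt F ((DF z).comp jZV) z)
    (D2F : Z → Z →L[ℝ] V →L[ℝ] ℝ)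
    (hD2F : ∀ z : Z, HasFDerivAt DF (D2F z) z)
    (hD2F_cont : Continuous D2F)
    (C₀ q : ℝ) (hC₀ : 0 < C₀) (hq : 1 ≤ q)
    (hD2F_bound : ∀ z v : Z, ‖D2F z v‖ ≤ C₀ * (1 + ‖z‖ ^ q) * ‖v‖) :
    ∀ ρ > (0:ℝ), ∀ κ > (0:ℝ), ∃ Cρκ > (0:ℝ), ∀ z₁ z₂ : Z,
      ‖z₁‖ ≤ ρ → ‖z₂‖ ≤ ρ →
      |DF z₁ (jZV (z₁ - z₂)) - DF z₂ (jZV (z₁ - z₂))| ≤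
        κ * ‖z₁ - z₂‖ ^ 2 +
          Cρκ * min (R (jVX (jZV (z₁ - z₂)))) (R (jVX (jZV (z₂ - z₁)))) *
            Real.sqrt (VV (jZV (z₁ - z₂)) (jZV (z₁ - z₂))) := by
  intro ρ _ κ hκ
  have hDF_lip := lipschitzOnWith_closedBall_of_norm_hasFDerivAt_le_rpow hC₀.le
    (zero_le_one.trans hq) hD2F
    (fun z ↦ (D2F z).opNorm_le_bound (by positivity) (hD2F_bound z)) ρ
  obtain ⟨K, hK, hle⟩ :=
    stmt0_general (j := jZV.toLinearMap) hjZV_cpt hjVX_inj hγ hVV_ell hc hR_low hDF_lip hκ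
  exact ⟨K, hK, fun z₁ z₂ h₁ h₂ ↦
    hle z₁ (mem_closedBall_zero_iff.2 h₁) z₂ (mem_closedBall_zero_iff.2 h₂)⟩
end

section
/- Under the stated assumptions on Z, V, X, A, R and F, for every ρ > 0 there exists λ = λ(ρ) > 0 such that for all z₁, z₂ ∈ Z with ‖z₁‖_Z ≤ ρ and ‖z₂‖_Z ≤ ρ one has ⟨DI(z₁) − DI(z₂), z₁ − z₂⟩ ≥ (α/2)‖z₁ − z₂‖_Z² − λ‖z₁ − z₂‖_𝕍². -/
/-! The growth bound on `D²F` makes `DF` Lipschitz on balls with values in `V*`, so perturbing the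
elliptic form `A` by `DF` costs only a product `M ‖w‖_Z ‖w‖_V` of a strong and a weak norm. Young's
inequality absorbs the strong factor into half of the ellipticity of `A`; the weak one is controlled
by `𝕍`. -/

open Metric
open scoped NNReal

section LipschitzOnBalls

variable {E F : Type*} [NormedAddCommGroup E] [NormedSpace ℝ E]
  [NormedAddCommGroup F] [NormedSpace ℝ F] {f : E → F} {f' : E → E →L[ℝ] F}

lemma lipschitzOnWith_closedBall_of_norm_hasFDerivAt_le {φ : ℝ → ℝ}
    (hf : ∀ x, HasFDerivAt f (f' x) x) (hφ : MonotoneOn φ (Set.Ici 0))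
    (bound : ∀ x, ‖f' x‖ ≤ φ ‖x‖) (ρ : ℝ) :
    LipschitzOnWith (φ ρ).toNNReal f (closedBall 0 ρ) := by
  refine (convex_closedBall 0 ρ).lipschitzOnWith_of_nnnorm_hasFDerivWithin_le
    (fun x _ ↦ (hf x).hasFDerivWithinAt) fun x hx ↦ ?_
  have hxρ : ‖x‖ ≤ ρ := mem_closedBall_zero_iff.mp hx
  have hx₀ : 0 ≤ ‖x‖ := norm_nonneg x
  exact NNReal.le_toNNReal_of_coe_le ((bound x).trans (hφ hx₀ (hx₀.trans hxρ) hxρ))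

lemma lipschitzOnWith_closedBall_of_hasFDerivAt_rpow_growth {C q : ℝ}
    (hf : ∀ x, HasFDerivAt f (f' x) x) (hC : 0 ≤ C) (hq : 0 ≤ q)
    (bound : ∀ x v, ‖f' x v‖ ≤ C * (1 + ‖x‖ ^ q) * ‖v‖) (ρ : ℝ) :
    LipschitzOnWith (C * (1 + ρ ^ q)).toNNReal f (closedBall 0 ρ) := by
  refine lipschitzOnWith_closedBall_of_norm_hasFDerivAt_le
    (φ := fun r ↦ C * (1 + r ^ q)) hf ?_ (fun x ↦ ?_) ρ
  · exact fun r hr s hs hrs ↦ mul_le_mul_of_nonneg_left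
      (add_le_add_right (Real.monotoneOn_rpow_Ici_of_exponent_nonneg hq hr hs hrs) 1) hC
  · exact (f' x).opNorm_le_bound (by positivity) (bound x)

end LipschitzOnBalls

section CoerciveForms

variable {Z V : Type*} [SeminormedAddCommGroup Z] [NormedSpace ℝ Z]
  [SeminormedAddCommGroup V] [NormedSpace ℝ V]
  {A : Z →L[ℝ] Z →L[ℝ] ℝ} {B : V →L[ℝ] V →L[ℝ] ℝ} {α γ : ℝ}

lemma half_mul_sq_sub_le_coercive_add_apply (hα : 0 < α) (hA : ∀ z, α * ‖z‖ ^ 2 ≤ A z z)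
    (hγ : 0 < γ) (hB : ∀ v, γ * ‖v‖ ^ 2 ≤ B v v)
    {M : ℝ} {g : V →L[ℝ] ℝ} {w : Z} (hg : ‖g‖ ≤ M * ‖w‖) (v : V) :
    α / 2 * ‖w‖ ^ 2 - M ^ 2 / (2 * α * γ) * B v v ≤ A w w + g v := by
  have perturbation : -(M * ‖w‖ * ‖v‖) ≤ g v := (abs_le.mp (g.le_of_opNorm_le hg v)).1
  have young : 2 * ‖w‖ * (M * ‖v‖) ≤ α * ‖w‖ ^ 2 + α⁻¹ * (M * ‖v‖) ^ 2 :=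
    two_mul_le_add_mul_sq hα
  have coercive_bound : α⁻¹ * (M * ‖v‖) ^ 2 ≤ 2 * (M ^ 2 / (2 * α * γ) * B v v) :=
    calc α⁻¹ * (M * ‖v‖) ^ 2 = 2 * (M ^ 2 / (2 * α * γ) * (γ * ‖v‖ ^ 2)) := by field_simp
      _ ≤ 2 * (M ^ 2 / (2 * α * γ) * B v v) := by gcongr; exact hB v
  linarith [hA w]

theorem stmt1_general (j : Z →L[ℝ] V) (hα : 0 < α) (hA : ∀ z, α * ‖z‖ ^ 2 ≤ A z z)
    (hγ : 0 < γ) (hB : ∀ v, γ * ‖v‖ ^ 2 ≤ B v v) {G : Z → V →L[ℝ] ℝ}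
    (hG : ∀ ρ > (0 : ℝ), ∃ K : ℝ≥0, LipschitzOnWith K G (closedBall 0 ρ)) :
    ∀ ρ > (0 : ℝ), ∃ lam > (0 : ℝ), ∀ z₁ z₂ : Z, ‖z₁‖ ≤ ρ → ‖z₂‖ ≤ ρ →
      (A z₁ (z₁ - z₂) + G z₁ (j (z₁ - z₂))) - (A z₂ (z₁ - z₂) + G z₂ (j (z₁ - z₂))) ≥
        α / 2 * ‖z₁ - z₂‖ ^ 2 - lam * B (j (z₁ - z₂)) (j (z₁ - z₂)) := by
  intro ρ hρ
  obtain ⟨K, hK⟩ := hG ρ hρ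
  -- `K + 1` in place of `K` keeps the constant positive when `G` is constant on the ball.
  refine ⟨(K + 1 : ℝ≥0) ^ 2 / (2 * α * γ), by positivity, fun z₁ z₂ h₁ h₂ ↦ ?_⟩
  have lipschitz : ‖G z₁ - G z₂‖ ≤ (K + 1 : ℝ≥0) * ‖z₁ - z₂‖ :=
    (hK.weaken le_self_add).norm_sub_le
      (mem_closedBall_zero_iff.mpr h₁) (mem_closedBall_zero_iff.mpr h₂)
  calc (A z₁ (z₁ - z₂) + G z₁ (j (z₁ - z₂))) - (A z₂ (z₁ - z₂) + G z₂ (j (z₁ - z₂)))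
      = A (z₁ - z₂) (z₁ - z₂) + (G z₁ - G z₂) (j (z₁ - z₂)) := by
        rw [A.map_sub z₁ z₂, sub_apply, sub_apply]
        ring
    _ ≥ _ := half_mul_sq_sub_le_coercive_add_apply hα hA hγ hB lipschitz _

end CoerciveForms

/-- λ-convexity of the energy on sublevels (estimate
`est.lambda-convex` of the paper): for every `ρ > 0` there is `λ = λ(ρ) > 0`
such that `⟨DI(z₁) − DI(z₂), z₁ − z₂⟩ ≥ (α/2)‖z₁−z₂‖_Z² − λ‖z₁−z₂‖_𝕍²`
whenever `‖zᵢ‖_Z ≤ ρ`.  Here `I(z) = ½⟨Az,z⟩ + F(z)` and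
`DI(z) = Az + DF(z)`, realized through the bilinear forms `A` and the
`V*`-valued derivative `DF`. -/
theorem stmt1
    {Z V X : Type*}
    [NormedAddCommGroup Z] [InnerProductSpace ℝ Z] [CompleteSpace Z]
    [TopologicalSpace.SeparableSpace Z]
    [NormedAddCommGroup V] [InnerProductSpace ℝ V] [CompleteSpace V]
    [TopologicalSpace.SeparableSpace V]
    [NormedAddCommGroup X] [NormedSpace ℝ X]
    (jZV : Z →L[ℝ] V) (hjZV_inj : Function.Injective jZV)
    (hjZV_cpt : IsCompactOperator jZV)
    (jVX : V →L[ℝ] X) (hjVX_inj : Function.Injective jVX)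
    (A : Z →L[ℝ] Z →L[ℝ] ℝ) (hA_symm : ∀ z w : Z, A z w = A w z)
    (α : ℝ) (hα : 0 < α) (hA_ell : ∀ z : Z, α * ‖z‖ ^ 2 ≤ A z z)
    (VV : V →L[ℝ] V →L[ℝ] ℝ) (hVV_symm : ∀ u v : V, VV u v = VV v u)
    (γ : ℝ) (hγ : 0 < γ) (hVV_ell : ∀ v : V, γ * ‖v‖ ^ 2 ≤ VV v v)
    (R : X → ℝ) (hR_conv : ConvexOn ℝ Set.univ R) (hR_cont : Continuous R)
    (hR_hom : ∀ t : ℝ, 0 ≤ t → ∀ x : X, R (t • x) = t * R x)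
    (c C : ℝ) (hc : 0 < c) (hC : 0 < C)
    (hR_low : ∀ x : X, c * ‖x‖ ≤ R x) (hR_up : ∀ x : X, R x ≤ C * ‖x‖)
    (F : Z → ℝ) (hF_nonneg : ∀ z : Z, 0 ≤ F z)
    (DF : Z → V →L[ℝ] ℝ)
    (hDF : ∀ z : Z, HasFDerivAt F ((DF z).comp jZV) z)
    (D2F : Z → Z →L[ℝ] V →L[ℝ] ℝ)
    (hD2F : ∀ z : Z, HasFDerivAt DF (D2F z) z)
    (hD2F_cont : Continuous D2F)
    (C₀ q : ℝ) (hC₀ : 0 < C₀) (hq : 1 ≤ q)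
    (hD2F_bound : ∀ z v : Z, ‖D2F z v‖ ≤ C₀ * (1 + ‖z‖ ^ q) * ‖v‖) :
    ∀ ρ > (0:ℝ), ∃ lam > (0:ℝ), ∀ z₁ z₂ : Z,
      ‖z₁‖ ≤ ρ → ‖z₂‖ ≤ ρ →
      (A z₁ (z₁ - z₂) + DF z₁ (jZV (z₁ - z₂)))
          - (A z₂ (z₁ - z₂) + DF z₂ (jZV (z₁ - z₂))) ≥
        α / 2 * ‖z₁ - z₂‖ ^ 2 - lam * VV (jZV (z₁ - z₂)) (jZV (z₁ - z₂)) :=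
  stmt1_general jZV hα hA_ell hγ hVV_ell fun ρ _ ↦
    ⟨_, lipschitzOnWith_closedBall_of_hasFDerivAt_rpow_growth hD2F hC₀.le
      (zero_le_one.trans hq) hD2F_bound ρ⟩
end

section
/- (Uniqueness for the autonomous viscous system on ℝ₊.) Under the stated assumptions on Z, V, X, A, 𝕍, R and F, let ℓ* ∈ V* and z₀ ∈ Z. If z₁, z₂ : [0,∞) → Z are two functions that are essentially bounded with values in Z, absolutely continuous as maps into V on each bounded interval with a.e. derivatives ż₁, ż₂ ∈ L¹((0,a);V) for every a > 0, satisfy z₁(0) = z₂(0) = z₀, and both solve the viscous inclusion 0 ∈ ∂R(ż(t)) + 𝕍ż(t) + DI(z(t)) − ℓ* for almost all t > 0, then z₁(t) = z₂(t) for all t ≥ 0. -/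
open MeasureTheory

open Set Filter Topology

/-!
Let `y` be the difference of two solutions. The energy `A y y / 2` should grow at most at the rate
`A y ẏ`, which monotonicity of the subdifferential, Young's inequality and coercivity bound by a
multiple of `A y y`, so that Grönwall's inequality gives `y = 0`. The obstacle is the chain rule:
`ẏ` lies only in `L¹(0, T; V)`, while `A` is bounded only on `Z`.

We therefore replace `A` by its Yosida approximations `Q n`, which are bounded on `V` and for which
the chain rule holds. There is no integrable bound for `|Q n (y, ẏ)|`, but since the dissipation is
bounded by a multiple of the norm of `V`, the inclusion bounds `Q n (y, ẏ)` *from above* by a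
constant independent of `n`. A one-sided dominated convergence argument then yields the energy
inequality for `A`.
-/

theorem absolutelyContinuousOnInterval_intervalIntegral {E : Type*} [NormedAddCommGroup E]
    [NormedSpace ℝ E] {f : ℝ → E} {a b c : ℝ} (hf : IntervalIntegrable f volume a b)
    (hc : c ∈ uIcc a b) :
    AbsolutelyContinuousOnInterval (fun x ↦ ∫ t in c..x, f t) a b := by
  have hnorm := hf.norm.absolutelyContinuousOnInterval_intervalIntegral hc
  refine squeeze_zero' (.of_forall fun _ ↦ Finset.sum_nonneg fun _ _ ↦ dist_nonneg) ?_ hnorm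
  filter_upwards [mem_inf_of_right (mem_principal_self _)] with I hI
  refine Finset.sum_le_sum fun k hk ↦ ?_
  obtain ⟨hx, hy⟩ := hI.1 k hk
  have hint : ∀ {s}, s ∈ uIcc a b → IntervalIntegrable f volume c s := fun hs ↦
    hf.mono_set (uIcc_subset_uIcc hc hs)
  rw [dist_eq_norm, dist_eq_norm,
    intervalIntegral.integral_interval_sub_left (hint hx) (hint hy),
    intervalIntegral.integral_interval_sub_left (hint hx).norm (hint hy).norm]
  exact intervalIntegral.norm_integral_le_abs_integral_norm

theorem absolutelyContinuousOnInterval_clm_apply₂ {E F G : Type*}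
    [NormedAddCommGroup E] [NormedSpace ℝ E] [NormedAddCommGroup F] [NormedSpace ℝ F]
    [NormedAddCommGroup G] [NormedSpace ℝ G] (Q : E →L[ℝ] F →L[ℝ] G) {u : ℝ → E} {v : ℝ → F}
    {a b : ℝ} (hu : AbsolutelyContinuousOnInterval u a b)
    (hv : AbsolutelyContinuousOnInterval v a b) :
    AbsolutelyContinuousOnInterval (fun t ↦ Q (u t) (v t)) a b := by
  obtain ⟨C, hC⟩ := hu.exists_bound
  obtain ⟨D, hD⟩ := hv.exists_bound
  have hdist : ∀ x ∈ uIcc a b, ∀ y ∈ uIcc a b, dist (Q (u x) (v x)) (Q (u y) (v y)) ≤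
      ‖Q‖ * C * dist (v x) (v y) + ‖Q‖ * D * dist (u x) (u y) := fun x hx y hy ↦ by
    calc dist (Q (u x) (v x)) (Q (u y) (v y))
        = ‖Q (u x) (v x - v y) + Q (u x - u y) (v y)‖ := by
          rw [dist_eq_norm, map_sub, map_sub, sub_apply, sub_add_sub_cancel]
      _ ≤ ‖Q‖ * ‖u x‖ * ‖v x - v y‖ + ‖Q‖ * ‖u x - u y‖ * ‖v y‖ :=
          norm_add_le_of_le (Q.le_opNorm₂ _ _) (Q.le_opNorm₂ _ _)
      _ ≤ ‖Q‖ * C * ‖v x - v y‖ + ‖Q‖ * ‖u x - u y‖ * D := by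
          gcongr
          · exact hC x hx
          · exact hD y hy
      _ = ‖Q‖ * C * dist (v x) (v y) + ‖Q‖ * D * dist (u x) (u y) := by
          rw [dist_eq_norm, dist_eq_norm]; ring
  have hlim := (Tendsto.const_mul (‖Q‖ * C) hv).add (Tendsto.const_mul (‖Q‖ * D) hu)
  simp only [mul_zero, add_zero] at hlim
  refine squeeze_zero' (.of_forall fun _ ↦ Finset.sum_nonneg fun _ _ ↦ dist_nonneg) ?_ hlim
  filter_upwards [mem_inf_of_right (mem_principal_self _)] with I hI
  simp only [Finset.mul_sum, ← Finset.sum_add_distrib]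
  exact Finset.sum_le_sum fun k hk ↦ hdist _ (hI.1 k hk).1 _ (hI.1 k hk).2

theorem intervalIntegrable_clm_apply_intervalIntegral {E F : Type*}
    [NormedAddCommGroup E] [NormedSpace ℝ E] [NormedAddCommGroup F] [NormedSpace ℝ F]
    (Q : E →L[ℝ] F →L[ℝ] ℝ) {f : ℝ → E} {g : ℝ → F} {a b : ℝ}
    (hf : IntervalIntegrable f volume a b) (hg : IntervalIntegrable g volume a b) :
    IntervalIntegrable (fun t ↦ Q (∫ s in a..t, f s) (g t)) volume a b := by
  have hcont := (absolutelyContinuousOnInterval_intervalIntegral hf left_mem_uIcc).continuousOn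
  obtain ⟨C, hC⟩ := isCompact_uIcc.exists_bound_of_continuousOn hcont
  rw [intervalIntegrable_iff] at hg ⊢
  exact Q.integrable_of_bilin_of_bdd_left C
    ((hcont.mono uIoc_subset_uIcc).aestronglyMeasurable measurableSet_uIoc)
    (ae_restrict_of_forall_mem measurableSet_uIoc fun t ht ↦ hC t (uIoc_subset_uIcc ht)) hg

theorem integral_clm_apply_intervalIntegral {E : Type*} [NormedAddCommGroup E]
    [NormedSpace ℝ E] [CompleteSpace E] {Q : E →L[ℝ] E →L[ℝ] ℝ} (hQ : ∀ u v, Q u v = Q v u)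
    {g : ℝ → E} {a b : ℝ} (hg : IntervalIntegrable g volume a b) :
    ∫ t in a..b, Q (∫ s in a..t, g s) (g t) = Q (∫ s in a..b, g s) (∫ s in a..b, g s) / 2 := by
  have hac := absolutelyContinuousOnInterval_intervalIntegral hg left_mem_uIcc
  have hderiv : ∀ᵐ t, t ∈ uIoc a b →
      deriv (fun t ↦ Q (∫ s in a..t, g s) (∫ s in a..t, g s)) t =
        Q (∫ s in a..t, g s) (g t) * 2 := by
    filter_upwards [hg.ae_hasDerivAt_integral] with t ht hmem
    have ht := ht (uIoc_subset_uIcc hmem) a left_mem_uIcc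
    rw [(Q.hasDerivAt_of_bilinear (fun _ ↦ ht) (fun _ ↦ ht)).deriv, hQ (g t), mul_two]
  rw [eq_div_iff two_ne_zero, ← intervalIntegral.integral_mul_const,
    ← intervalIntegral.integral_congr_ae hderiv,
    (absolutelyContinuousOnInterval_clm_apply₂ Q hac hac).integral_deriv_eq_sub]
  simp

theorem ae_mem_of_intervalIntegral_mem {E : Type*} [NormedAddCommGroup E] [NormedSpace ℝ E]
    [CompleteSpace E] {K : Submodule ℝ E} (hK : IsClosed (K : Set E)) {g : ℝ → E} {a b : ℝ}
    (hg : IntervalIntegrable g volume a b) (h : ∀ t ∈ Icc a b, ∫ s in a..t, g s ∈ K) :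
    ∀ᵐ t ∂volume.restrict (Ioc a b), g t ∈ K := by
  rw [← restrict_Ioo_eq_restrict_Ioc, ae_restrict_iff' measurableSet_Ioo]
  filter_upwards [hg.ae_hasDerivAt_integral] with t hderiv ht
  have hslope := (hderiv (Icc_subset_uIcc (Ioo_subset_Icc_self ht)) a left_mem_uIcc).tendsto_slope
  refine hK.mem_of_tendsto hslope ?_
  filter_upwards [nhdsWithin_le_nhds (Icc_mem_nhds ht.1 ht.2)] with s hs
  exact K.smul_mem _ (K.sub_mem (h s hs) (h t (Ioo_subset_Icc_self ht)))

theorem le_integral_of_tendsto_of_ae_le {Ω : Type*} [MeasurableSpace Ω] {μ : Measure Ω}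
    {f : ℕ → Ω → ℝ} {c k : Ω → ℝ} {l : ℝ} (hf : ∀ n, Integrable (f n) μ)
    (hc : Integrable c μ) (hk : Integrable k μ) (hfc : ∀ n, f n ≤ᵐ[μ] c)
    (hlim : ∀ᵐ x ∂μ, ∃ y ≤ k x, Tendsto (fun n ↦ f n x) atTop (𝓝 y))
    (hl : Tendsto (fun n ↦ ∫ x, f n x ∂μ) atTop (𝓝 l)) : l ≤ ∫ x, k x ∂μ := by
  have hmax : Tendsto (fun n ↦ ∫ x, max (f n x) (k x) ∂μ) atTop (𝓝 (∫ x, k x ∂μ)) := by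
    refine tendsto_integral_of_dominated_convergence (fun x ↦ |c x| + |k x|)
      (fun n ↦ ((hf n).sup hk).aestronglyMeasurable) (hc.abs.add hk.abs) (fun n ↦ ?_) ?_
    · filter_upwards [hfc n] with x hx
      rw [Real.norm_eq_abs, abs_le]
      constructor
      · linarith [le_max_right (f n x) (k x), neg_abs_le (k x), abs_nonneg (c x)]
      · exact max_le (by linarith [le_abs_self (c x), abs_nonneg (k x)])
          (by linarith [le_abs_self (k x), abs_nonneg (c x)])
    · filter_upwards [hlim] with x ⟨y, hyk, hy⟩
      simpa only [max_eq_right hyk] using hy.max (tendsto_const_nhds (x := k x))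
  exact le_of_tendsto_of_tendsto' hl hmax fun n ↦
    integral_mono (hf n) ((hf n).sup hk) fun x ↦ le_max_left _ _

theorem intervalIntegral_nonpos_of_ae_le_mul {f : ℝ → ℝ} {κ a b : ℝ} (hab : a ≤ b)
    (hf : IntervalIntegrable f volume a b)
    (h : ∀ᵐ t ∂volume.restrict (Ioc a b), f t ≤ κ * ∫ s in a..t, f s) :
    ∫ s in a..b, f s ≤ 0 := by
  have hexp : ContDiff ℝ 1 fun t ↦ Real.exp (-(κ * t)) := by fun_prop
  have hac := hexp.contDiffOn.absolutelyContinuousOnInterval.mul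
    (absolutelyContinuousOnInterval_intervalIntegral hf left_mem_uIcc)
  have hderiv : ∀ᵐ t ∂volume.restrict (Ioc a b),
      deriv ((fun t ↦ Real.exp (-(κ * t))) * fun t ↦ ∫ s in a..t, f s) t ≤ 0 := by
    filter_upwards [h, ae_restrict_mem measurableSet_Ioc,
      ae_restrict_of_ae hf.ae_hasDerivAt_integral] with t hle ht hint
    have hint := hint (Icc_subset_uIcc (Ioc_subset_Icc_self ht)) a left_mem_uIcc
    have hexp : HasDerivAt (fun t ↦ Real.exp (-(κ * t))) (Real.exp (-(κ * t)) * -κ) t := by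
      simpa using ((hasDerivAt_id t).const_mul κ).fun_neg.exp
    rw [(hexp.mul hint).deriv]
    nlinarith [Real.exp_pos (-(κ * t))]
  have hle := integral_nonpos_of_ae hderiv
  rw [← intervalIntegral.integral_of_le hab, hac.integral_deriv_eq_sub] at hle
  simpa [mul_nonpos_iff, (Real.exp_pos _).not_ge, (Real.exp_pos _).le] using hle

theorem isCoercive_of_mul_sq_norm_le {E : Type*} [NormedAddCommGroup E] [NormedSpace ℝ E]
    {A : E →L[ℝ] E →L[ℝ] ℝ} {α : ℝ} (hα : 0 < α) (h : ∀ x, α * ‖x‖ ^ 2 ≤ A x x) : IsCoercive A :=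
  ⟨α, hα, by simpa only [sq, mul_assoc] using h⟩

theorem mul_sub_mul_sq_le {γ : ℝ} (hγ : 0 < γ) (D x : ℝ) :
    D * x - γ * x ^ 2 ≤ D ^ 2 / (4 * γ) := by
  rw [le_div_iff₀ (by positivity)]
  nlinarith [sq_nonneg (2 * γ * x - D)]

section PositivelyHomogeneous

variable {E : Type*} [NormedAddCommGroup E] [NormedSpace ℝ E] {ρ : E → ℝ}

theorem exists_forall_le_mul_norm (hρ : ContinuousAt ρ 0)
    (hom : ∀ t : ℝ, 0 ≤ t → ∀ x, ρ (t • x) = t * ρ x) : ∃ c : ℝ, ∀ x, ρ x ≤ c * ‖x‖ := by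
  have hzero : ρ 0 = 0 := by simpa using hom 0 le_rfl 0
  obtain ⟨δ, hδ, hball⟩ := Metric.eventually_nhds_iff_ball.1
    (hρ.eventually_lt continuousAt_const (hzero.trans_lt one_pos))
  refine ⟨2 / δ, fun x ↦ ?_⟩
  rcases (norm_nonneg x).eq_or_lt' with hx | hx
  · simp [norm_eq_zero.1 hx, hzero]
  have hlt : ρ ((δ / (2 * ‖x‖)) • x) < 1 := hball _ <| by
    rw [mem_ball_zero_iff, norm_smul, Real.norm_of_nonneg (by positivity)]
    field_simp
    norm_num
  rw [hom _ (by positivity), div_mul_eq_mul_div, div_lt_one (by positivity)] at hlt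
  rw [div_mul_eq_mul_div, le_div_iff₀ hδ]
  linarith

theorem eq_and_le_of_subgradient (hom : ∀ t : ℝ, 0 ≤ t → ∀ x, ρ (t • x) = t * ρ x)
    {K : Submodule ℝ E} {η : E →L[ℝ] ℝ} {v : E} (hv : v ∈ K)
    (h : ∀ u ∈ K, ρ v + η (u - v) ≤ ρ u) : η v = ρ v ∧ ∀ u ∈ K, η u ≤ ρ u := by
  have hdouble := h ((2 : ℝ) • v) (K.smul_mem 2 hv)
  have hzero := h ((0 : ℝ) • v) (K.smul_mem 0 hv)
  rw [hom _ (by norm_num), map_sub, map_smul, smul_eq_mul] at hdouble hzero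
  have heq : η v = ρ v := by linarith
  refine ⟨heq, fun u hu ↦ ?_⟩
  have := h u hu
  rw [map_sub] at this
  linarith

end PositivelyHomogeneous

section Lipschitz

variable {E G : Type*} [NormedAddCommGroup E] [NormedSpace ℝ E] [NormedAddCommGroup G]
  [NormedSpace ℝ G] {f : E → G} {f' : E → E →L[ℝ] G}

theorem exists_lipschitzOnWith_closedBall {b : ℝ → ℝ} (hf : ∀ x, HasFDerivAt f (f' x) x)
    (hb : MonotoneOn b (Ici 0)) (hf' : ∀ x, ‖f' x‖ ≤ b ‖x‖) (M : ℝ) :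
    ∃ L, LipschitzOnWith L f (Metric.closedBall 0 M) := by
  refine ⟨(b M).toNNReal, (convex_closedBall 0 M).lipschitzOnWith_of_nnnorm_hasFDerivWithin_le
    (fun x _ ↦ (hf x).hasFDerivWithinAt) fun x hx ↦ ?_⟩
  have hx : ‖x‖ ≤ M := mem_closedBall_zero_iff.1 hx
  rw [← NNReal.coe_le_coe, coe_nnnorm]
  calc ‖f' x‖ ≤ b ‖x‖ := hf' x
    _ ≤ b M := hb (norm_nonneg x) ((norm_nonneg x).trans hx) hx
    _ ≤ (b M).toNNReal := Real.le_coe_toNNReal _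

theorem exists_lipschitzOnWith_closedBall_of_rpow_growth {C q : ℝ}
    (hf : ∀ x, HasFDerivAt f (f' x) x) (hC : 0 ≤ C) (hq : 0 ≤ q)
    (hf' : ∀ x v, ‖f' x v‖ ≤ C * (1 + ‖x‖ ^ q) * ‖v‖) (M : ℝ) :
    ∃ L, LipschitzOnWith L f (Metric.closedBall 0 M) := by
  refine exists_lipschitzOnWith_closedBall (b := fun r ↦ C * (1 + r ^ q)) hf ?_
    (fun x ↦ (f' x).opNorm_le_bound (by positivity) (hf' x)) M
  intro r hr s _ hrs
  have := Real.rpow_le_rpow hr hrs hq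
  dsimp only
  gcongr

end Lipschitz

section Resolvent

variable {Z V : Type*} [NormedAddCommGroup V] [NormedSpace ℝ V] [NormedAddCommGroup Z]

/-- `J` is the resolvent `(B + ε A)⁻¹ B` of the form `A` on `Z` relative to the form `B` on `V`,
described weakly so that no inverse occurs. -/
def IsResolvent [NormedSpace ℝ Z] (i : Z →L[ℝ] V) (A : Z →L[ℝ] Z →L[ℝ] ℝ)
    (B : V →L[ℝ] V →L[ℝ] ℝ) (ε : ℝ) (J : V →L[ℝ] Z) : Prop :=
  ∀ v w, B (i (J v)) (i w) + ε * A (J v) w = B v (i w)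

theorem exists_isResolvent [InnerProductSpace ℝ Z] [CompleteSpace Z] (i : Z →L[ℝ] V)
    {A : Z →L[ℝ] Z →L[ℝ] ℝ} (hA : IsCoercive A) {B : V →L[ℝ] V →L[ℝ] ℝ} (hB : ∀ v, 0 ≤ B v v)
    {ε : ℝ} (hε : 0 < ε) : ∃ J, IsResolvent i A B ε J := by
  have hE : IsCoercive (B.bilinearComp i i + ε • A) := by
    obtain ⟨α, hα, hA⟩ := hA
    refine ⟨ε * α, mul_pos hε hα, fun z ↦ ?_⟩
    have := mul_le_mul_of_nonneg_left (hA z) hε.le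
    simp only [add_apply, ContinuousLinearMap.bilinearComp_apply, smul_apply, smul_eq_mul]
    linarith [hB (i z)]
  let P : V →L[ℝ] Z :=
    ((InnerProductSpace.toDual ℝ Z).symm.toContinuousLinearEquiv : _ →L⋆[ℝ] Z).comp
      (B.bilinearComp (ContinuousLinearMap.id ℝ V) i)
  refine ⟨(hE.continuousLinearEquivOfBilin.symm : Z →L[ℝ] Z).comp P, fun v w ↦ ?_⟩
  have := hE.continuousLinearEquivOfBilin_apply (hE.continuousLinearEquivOfBilin.symm (P v)) w
  rw [ContinuousLinearEquiv.apply_symm_apply] at this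
  simpa [P] using this.symm

variable [NormedSpace ℝ Z] {i : Z →L[ℝ] V} {A : Z →L[ℝ] Z →L[ℝ] ℝ} {B : V →L[ℝ] V →L[ℝ] ℝ}

namespace IsResolvent

variable {ε α γ : ℝ} {J : V →L[ℝ] Z}

theorem apply_comm (hJ : IsResolvent i A B ε J) (hA : ∀ z w, A z w = A w z)
    (hB : ∀ u v, B u v = B v u) (u v : V) : B (i (J u)) v = B u (i (J v)) := by
  rw [hB, ← hJ v, ← hJ u, hB, hA]

theorem norm_apply_le (hJ : IsResolvent i A B ε J) (hA : ∀ z, 0 ≤ A z z)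
    (hB : ∀ v, γ * ‖v‖ * ‖v‖ ≤ B v v) (hε : 0 ≤ ε) (v : V) : γ * ‖i (J v)‖ ≤ ‖B‖ * ‖v‖ := by
  rcases eq_or_ne (i (J v)) 0 with h | h
  · simpa [h] using by positivity
  refine le_of_mul_le_mul_right ?_ (norm_pos_iff.2 h)
  calc γ * ‖i (J v)‖ * ‖i (J v)‖ ≤ B (i (J v)) (i (J v)) + ε * A (J v) (J v) :=
        le_add_of_le_of_nonneg (hB _) (mul_nonneg hε (hA _))
    _ = B v (i (J v)) := hJ v (J v)
    _ ≤ ‖B‖ * ‖v‖ * ‖i (J v)‖ := (le_abs_self _).trans (B.le_opNorm₂ v _)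

theorem mul_sq_norm_apply_sub_le (hJ : IsResolvent i A B ε J) (hα : 0 < α)
    (hA : ∀ z, α * ‖z‖ * ‖z‖ ≤ A z z) (hB : ∀ v, γ * ‖v‖ * ‖v‖ ≤ B v v) (hε : 0 ≤ ε) (z : Z) :
    γ * ‖i (J (i z)) - i z‖ ^ 2 ≤ ε * ((‖A‖ * ‖z‖) ^ 2 / (4 * α)) := by
  set d := J (i z) - z with hd
  have hJz : J (i z) = z + d := by rw [hd]; abel
  have hBd : B (i d) (i d) = ε * (-A z d - A d d) := by
    have h := hJ (i z) d
    rw [hJz, map_add, map_add, map_add, add_apply, add_apply] at h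
    linarith
  calc γ * ‖i (J (i z)) - i z‖ ^ 2 = γ * ‖i d‖ * ‖i d‖ := by rw [hd, map_sub]; ring
    _ ≤ B (i d) (i d) := hB _
    _ = ε * (-A z d - A d d) := hBd
    _ ≤ ε * (‖A‖ * ‖z‖ * ‖d‖ - α * ‖d‖ ^ 2) := by
        gcongr
        · exact (neg_le_abs _).trans (A.le_opNorm₂ z d)
        · linarith [hA d]
    _ ≤ ε * ((‖A‖ * ‖z‖) ^ 2 / (4 * α)) := by
        gcongr
        exact mul_sub_mul_sq_le hα _ _

theorem tendsto_apply {ι : Type*} {l : Filter ι} {ε : ι → ℝ} {J : ι → V →L[ℝ] Z}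
    (hJ : ∀ n, IsResolvent i A B (ε n) (J n)) (hA : IsCoercive A) (hB : IsCoercive B)
    (hε : ∀ n, 0 ≤ ε n) (hlim : Tendsto ε l (𝓝 0)) {u : V}
    (hu : u ∈ i.range.topologicalClosure) : Tendsto (fun n ↦ i (J n u)) l (𝓝 u) := by
  obtain ⟨α, hα, hA⟩ := hA
  obtain ⟨γ, hγ, hB⟩ := hB
  have hA_nonneg : ∀ z, 0 ≤ A z z := fun z ↦ le_trans (by positivity) (hA z)
  have hbound : ∃ C, ∀ n v, ‖i.comp (J n) v‖ ≤ C * ‖v‖ := by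
    refine ⟨‖B‖ / γ, fun n v ↦ ?_⟩
    rw [div_mul_eq_mul_div, le_div_iff₀' hγ]
    exact (hJ n).norm_apply_le hA_nonneg hB (hε n) v
  have hequi := ((NormedSpace.equicontinuous_TFAE fun n ↦ i.comp (J n)).out 1 3).2 hbound
  refine (hequi u).tendsto_of_mem_closure (s := range i) (f := id)
    (continuousAt_id.mono_left inf_le_left) ?_ hu
  rintro _ ⟨z, rfl⟩
  have hsq : Tendsto (fun n ↦ ‖i (J n (i z)) - i z‖ ^ 2) l (𝓝 0) := by
    refine squeeze_zero (g := fun n ↦ ε n * ((‖A‖ * ‖z‖) ^ 2 / (4 * α)) / γ)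
      (fun n ↦ by positivity) (fun n ↦ ?_) (by simpa using (hlim.mul_const _).div_const γ)
    rw [le_div_iff₀' hγ]
    exact (hJ n).mul_sq_norm_apply_sub_le hα hA hB (hε n) z
  rw [tendsto_iff_norm_sub_tendsto_zero]
  simpa using hsq.sqrt

end IsResolvent

/-- The Yosida approximation `ε⁻¹ B (1 - i J)` on `V` of the form `A` on `Z`, where `J` is the
resolvent with parameter `ε`. -/
noncomputable def yosida (i : Z →L[ℝ] V) (B : V →L[ℝ] V →L[ℝ] ℝ) (ε : ℝ) (J : V →L[ℝ] Z) :
    V →L[ℝ] V →L[ℝ] ℝ :=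
  ε⁻¹ • B.comp (ContinuousLinearMap.id ℝ V - i.comp J)

theorem yosida_apply (ε : ℝ) (J : V →L[ℝ] Z) (u v : V) :
    yosida i B ε J u v = ε⁻¹ * (B u v - B (i (J u)) v) := by
  simp [yosida]

namespace IsResolvent

variable {ε γ : ℝ} {J : V →L[ℝ] Z}

theorem yosida_comm (hJ : IsResolvent i A B ε J) (hA : ∀ z w, A z w = A w z)
    (hB : ∀ u v, B u v = B v u) (u v : V) : yosida i B ε J u v = yosida i B ε J v u := by
  rw [yosida_apply, yosida_apply, hJ.apply_comm hA hB, hB u v, hB u]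

theorem yosida_map_apply (hJ : IsResolvent i A B ε J) (hA : ∀ z w, A z w = A w z)
    (hB : ∀ u v, B u v = B v u) (hε : ε ≠ 0) (y : Z) (u : V) :
    yosida i B ε J (i y) u = A y (J u) := by
  rw [hJ.yosida_comm hA hB, yosida_apply, ← hJ u y, add_sub_cancel_left,
    inv_mul_cancel_left₀ hε, hA]

theorem yosida_map_apply_le (hJ : IsResolvent i A B ε J) (hA : ∀ z, 0 ≤ A z z)
    (hB : ∀ u v, B u v = B v u) (hγ : 0 < γ) (hB' : ∀ v, γ * ‖v‖ * ‖v‖ ≤ B v v) (hε : 0 < ε)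
    {D : ℝ} {y : Z} {v : V} (h : ∀ w, B v (i w) + A y w ≤ D * ‖i w‖) :
    yosida i B ε J (i y) v ≤ D ^ 2 / (4 * γ) := by
  set p := ε⁻¹ • (y - J (i y)) with hp
  have hy : y = J (i y) + ε • p := by rw [hp, smul_inv_smul₀ hε.ne']; abel
  have hyos : ∀ u, yosida i B ε J (i y) u = B (i p) u := fun u ↦ by
    rw [yosida_apply, hp, map_smul, map_smul, smul_apply, map_sub, map_sub, sub_apply, smul_eq_mul]
  have hBp : B (i p) (i p) = A (J (i y)) p := by
    rw [← hyos, yosida_apply, ← hJ, add_sub_cancel_left, inv_mul_cancel_left₀ hε.ne']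
  have hAp : A y p = B (i p) (i p) + ε * A p p := by
    rw [hBp]
    nth_rw 1 [hy]
    simp
  rw [hyos, hB]
  calc B v (i p) ≤ D * ‖i p‖ - γ * ‖i p‖ ^ 2 := by
        linarith [h p, hB' (i p), mul_nonneg hε.le (hA p)]
    _ ≤ D ^ 2 / (4 * γ) := mul_sub_mul_sq_le hγ _ _

end IsResolvent

end Resolvent

section EnergyBalance

variable {Z V : Type*} [NormedAddCommGroup Z] [NormedSpace ℝ Z] [NormedAddCommGroup V]
  [NormedSpace ℝ V]

/-- Bounded forms `Q n` on `V` approximating the form `A`, which is bounded only on `Z`. The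
one-sided bound `exists_le` replaces a dominating function when passing to the limit in the energy
balance. -/
structure IsYosidaApproximation (i : Z →L[ℝ] V) (A : Z →L[ℝ] Z →L[ℝ] ℝ)
    (B : V →L[ℝ] V →L[ℝ] ℝ) (Q : ℕ → V →L[ℝ] V →L[ℝ] ℝ) : Prop where
  symm : ∀ n u v, Q n u v = Q n v u
  tendsto : ∀ {y} {ζ : V →L[ℝ] ℝ}, (∀ w, ζ (i w) = A y w) → ∀ {u},
    u ∈ i.range.topologicalClosure → Tendsto (fun n ↦ Q n (i y) u) atTop (𝓝 (ζ u))
  exists_le : ∀ D, ∃ C, ∀ n y v, (∀ w, B v (i w) + A y w ≤ D * ‖i w‖) → Q n (i y) v ≤ C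

/-- When the state is `y` in `Z` and its velocity is `g` in `V`, the energy `A y y / 2` has power at
most `p`, and the viscous force `B g` balances `A y` up to an error bounded by `D` in the norm of
`V`. As `A y` need not act on `g : V`, the power is that of some extension `ζ` of `A y` to `V`. -/
def HasPowerBound (i : Z →L[ℝ] V) (A : Z →L[ℝ] Z →L[ℝ] ℝ) (B : V →L[ℝ] V →L[ℝ] ℝ)
    (D p : ℝ) (y : Z) (g : V) : Prop :=
  ∃ ζ : V →L[ℝ] ℝ, (∀ w, ζ (i w) = A y w) ∧ (∀ w, B g (i w) + A y w ≤ D * ‖i w‖) ∧ ζ g ≤ p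

variable {i : Z →L[ℝ] V} {A : Z →L[ℝ] Z →L[ℝ] ℝ} {B : V →L[ℝ] V →L[ℝ] ℝ} {D : ℝ}

theorem HasPowerBound.mono {D' p p' : ℝ} {y : Z} {g : V} (h : HasPowerBound i A B D p y g)
    (hD : D ≤ D') (hp : p ≤ p') : HasPowerBound i A B D' p' y g := by
  obtain ⟨ζ, hζ, hle, hpow⟩ := h
  exact ⟨ζ, hζ, fun w ↦ (hle w).trans (by gcongr), hpow.trans hp⟩

namespace IsYosidaApproximation

variable {y : ℝ → Z} {g : ℝ → V} {k : ℝ → ℝ} {T : ℝ} {Q : ℕ → V →L[ℝ] V →L[ℝ] ℝ}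

theorem intervalIntegrable_apply_self (hQ : IsYosidaApproximation i A B Q) (hT : 0 ≤ T)
    (hg : IntervalIntegrable g volume 0 T) (hy : ∀ t ∈ Icc 0 T, i (y t) = ∫ s in 0..t, g s)
    (hbdd : ∃ M, ∀ᵐ t ∂volume.restrict (Ioc 0 T), ‖y t‖ ≤ M)
    (hext : ∀ᵐ t ∂volume.restrict (Ioc 0 T), ∃ ζ : V →L[ℝ] ℝ, ∀ w, ζ (i w) = A (y t) w) :
    IntervalIntegrable (fun t ↦ A (y t) (y t)) volume 0 T := by
  obtain ⟨M, hM⟩ := hbdd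
  have hcont : ContinuousOn (fun t ↦ i (y t)) (Ioc 0 T) := by
    refine ContinuousOn.congr ?_ fun t ht ↦ hy t (Ioc_subset_Icc_self ht)
    refine (absolutelyContinuousOnInterval_intervalIntegral hg left_mem_uIcc).continuousOn.mono ?_
    rw [uIcc_of_le hT]
    exact Ioc_subset_Icc_self
  rw [intervalIntegrable_iff_integrableOn_Ioc_of_le hT]
  refine .of_bound (C := ‖A‖ * M * M) measure_Ioc_lt_top ?_ ?_
  · refine aestronglyMeasurable_of_tendsto_ae atTop (f := fun n t ↦ Q n (i (y t)) (i (y t)))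
      (fun n ↦ ?_) ?_
    · exact (((Q n).continuous.comp_continuousOn hcont).clm_apply hcont).aestronglyMeasurable
        measurableSet_Ioc
    · filter_upwards [hext] with t ⟨ζ, hζ⟩
      rw [← hζ]
      exact hQ.tendsto hζ (i.range.le_topologicalClosure ⟨y t, rfl⟩)
  · filter_upwards [hM] with t ht
    have hM_nonneg : 0 ≤ M := (norm_nonneg _).trans ht
    exact (A.le_opNorm₂ _ _).trans (by gcongr)

theorem apply_self_div_two_le_integral [CompleteSpace V] (hQ : IsYosidaApproximation i A B Q)
    (hT : 0 ≤ T) (hg : IntervalIntegrable g volume 0 T)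
    (hy : ∀ t ∈ Icc 0 T, i (y t) = ∫ s in 0..t, g s) (hk : IntervalIntegrable k volume 0 T)
    (hpow : ∀ᵐ t ∂volume.restrict (Ioc 0 T), HasPowerBound i A B D (k t) (y t) (g t))
    {ζ : V →L[ℝ] ℝ} (hζ : ∀ w, ζ (i w) = A (y T) w) :
    A (y T) (y T) / 2 ≤ ∫ s in 0..T, k s := by
  have hg_mem : ∀ᵐ t ∂volume.restrict (Ioc 0 T), g t ∈ i.range.topologicalClosure :=
    ae_mem_of_intervalIntegral_mem i.range.isClosed_topologicalClosure hg fun t ht ↦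
      i.range.le_topologicalClosure ⟨y t, hy t ht⟩
  obtain ⟨C, hC⟩ := hQ.exists_le D
  have hyi : ∀ s ∈ Ioc 0 T, ∫ r in 0..s, g r = i (y s) := fun s hs ↦
    (hy s (Ioc_subset_Icc_self hs)).symm
  have hlim : Tendsto (fun n ↦ Q n (i (y T)) (i (y T)) / 2) atTop (𝓝 (A (y T) (y T) / 2)) := by
    rw [← hζ]
    exact (hQ.tendsto hζ (i.range.le_topologicalClosure ⟨y T, rfl⟩)).div_const 2
  rw [intervalIntegral.integral_of_le hT]
  refine le_integral_of_tendsto_of_ae_le (c := fun _ ↦ C)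
    (f := fun n s ↦ Q n (∫ r in 0..s, g r) (g s)) (fun n ↦ ?_) (integrable_const C) hk.1
    (fun n ↦ ?_) ?_ (hlim.congr fun n ↦ ?_)
  · exact (intervalIntegrable_clm_apply_intervalIntegral (Q n) hg hg).1
  · filter_upwards [hpow, ae_restrict_mem measurableSet_Ioc] with s ⟨_, _, hs, _⟩ hsT
    rw [hyi s hsT]
    exact hC n _ _ hs
  · filter_upwards [hpow, hg_mem, ae_restrict_mem measurableSet_Ioc]
      with s ⟨ξ, hξ, _, hξk⟩ hs hsT
    simp only [hyi s hsT]
    exact ⟨ξ (g s), hξk, hQ.tendsto hξ hs⟩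
  · rw [← intervalIntegral.integral_of_le hT, integral_clm_apply_intervalIntegral (hQ.symm n) hg,
      hy T (right_mem_Icc.2 hT)]

theorem ae_apply_self_div_two_le_integral [CompleteSpace V] (hQ : IsYosidaApproximation i A B Q)
    (hg : IntervalIntegrable g volume 0 T) (hy : ∀ t ∈ Icc 0 T, i (y t) = ∫ s in 0..t, g s)
    (hk : IntervalIntegrable k volume 0 T)
    (hpow : ∀ᵐ t ∂volume.restrict (Ioc 0 T), HasPowerBound i A B D (k t) (y t) (g t)) :
    ∀ᵐ t ∂volume.restrict (Ioc 0 T), A (y t) (y t) / 2 ≤ ∫ s in 0..t, k s := by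
  filter_upwards [hpow, ae_restrict_mem measurableSet_Ioc] with t ⟨ζ, hζ, _⟩ ht
  have hsub : uIcc 0 t ⊆ uIcc 0 T :=
    uIcc_subset_uIcc_left (Icc_subset_uIcc (Ioc_subset_Icc_self ht))
  exact hQ.apply_self_div_two_le_integral ht.1.le (hg.mono_set hsub)
    (fun s hs ↦ hy s ⟨hs.1, hs.2.trans ht.2⟩) (hk.mono_set hsub)
    (ae_restrict_of_ae_restrict_of_subset (Ioc_subset_Ioc_right ht.2) hpow) hζ

end IsYosidaApproximation

end EnergyBalance

theorem exists_isYosidaApproximation {Z V : Type*} [NormedAddCommGroup Z]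
    [InnerProductSpace ℝ Z] [CompleteSpace Z] [NormedAddCommGroup V] [NormedSpace ℝ V]
    (i : Z →L[ℝ] V) {A : Z →L[ℝ] Z →L[ℝ] ℝ} (hA : ∀ z w, A z w = A w z) (hA' : IsCoercive A)
    {B : V →L[ℝ] V →L[ℝ] ℝ} (hB : ∀ u v, B u v = B v u) (hB' : IsCoercive B) :
    ∃ Q, IsYosidaApproximation i A B Q := by
  have hA_nonneg : ∀ z, 0 ≤ A z z := by
    obtain ⟨α, hα, h⟩ := hA'
    exact fun z ↦ le_trans (by positivity) (h z)
  have ⟨γ, hγ, hBγ⟩ := hB'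
  have hε : ∀ n : ℕ, 0 < 1 / ((n : ℝ) + 1) := fun _ ↦ Nat.one_div_pos_of_nat
  choose J hJ using fun n ↦
    exists_isResolvent i hA' (fun v ↦ le_trans (by positivity) (hBγ v)) (hε n)
  refine ⟨fun n ↦ yosida i B (1 / ((n : ℝ) + 1)) (J n),
    fun n ↦ (hJ n).yosida_comm hA hB, fun {y ζ} hζ {u} hu ↦ ?_,
    fun D ↦ ⟨D ^ 2 / (4 * γ), fun n y v ↦
      (hJ n).yosida_map_apply_le hA_nonneg hB hγ hBγ (hε n)⟩⟩
  simp only [fun n ↦ (hJ n).yosida_map_apply hA hB (hε n).ne' y u, ← hζ]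
  exact (ζ.continuous.tendsto u).comp <| IsResolvent.tendsto_apply hJ hA' hB'
    (fun n ↦ (hε n).le) tendsto_one_div_add_atTop_nhds_zero_nat hu

theorem eqOn_zero_of_hasPowerBound {Z V : Type*} [NormedAddCommGroup Z] [InnerProductSpace ℝ Z]
    [CompleteSpace Z] [NormedAddCommGroup V] [NormedSpace ℝ V] [CompleteSpace V] {i : Z →L[ℝ] V}
    {A : Z →L[ℝ] Z →L[ℝ] ℝ} (hA : ∀ z w, A z w = A w z) (hA' : IsCoercive A)
    {B : V →L[ℝ] V →L[ℝ] ℝ} (hB : ∀ u v, B u v = B v u) (hB' : IsCoercive B)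
    {y : ℝ → Z} {g : ℝ → V} {D κ T : ℝ}
    (hg : IntervalIntegrable g volume 0 T) (hy : ∀ t ∈ Icc 0 T, i (y t) = ∫ s in 0..t, g s)
    (hbdd : ∃ M, ∀ᵐ t ∂volume.restrict (Ioc 0 T), ‖y t‖ ≤ M)
    (hpow : ∀ᵐ t ∂volume.restrict (Ioc 0 T),
      HasPowerBound i A B D (κ * A (y t) (y t)) (y t) (g t)) :
    EqOn (fun t ↦ i (y t)) 0 (Icc 0 T) := by
  obtain ⟨Q, hQ⟩ := exists_isYosidaApproximation i hA hA' hB hB'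
  obtain ⟨α, hα, hAα⟩ := hA'
  intro t ht
  rcases (ht.1.trans ht.2).eq_or_lt with rfl | hT
  · obtain rfl : t = 0 := le_antisymm ht.2 ht.1
    simpa using hy 0 ht
  have hint := hQ.intervalIntegrable_apply_self hT.le hg hy hbdd
    (hpow.mono fun t ⟨ζ, hζ, _⟩ ↦ ⟨ζ, hζ⟩)
  have henergy : ∀ᵐ t ∂volume.restrict (Ioc 0 T),
      A (y t) (y t) ≤ 2 * κ * ∫ s in 0..t, A (y s) (y s) := by
    filter_upwards [hQ.ae_apply_self_div_two_le_integral hg hy (hint.const_mul κ) hpow] with t ht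
    rw [intervalIntegral.integral_const_mul] at ht
    linarith
  have hnonneg : 0 ≤ fun t ↦ A (y t) (y t) := fun t ↦ le_trans (by positivity) (hAα (y t))
  have hzero : ∫ s in 0..T, A (y s) (y s) = 0 :=
    (intervalIntegral_nonpos_of_ae_le_mul hT.le hint henergy).antisymm
      (intervalIntegral.integral_nonneg hT.le fun t _ ↦ hnonneg t)
  rw [intervalIntegral.integral_of_le hT.le, integral_eq_zero_iff_of_nonneg hnonneg hint.1] at hzero
  have hae : (fun t ↦ i (y t)) =ᵐ[volume.restrict (Icc 0 T)] 0 := by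
    rw [← restrict_Ioc_eq_restrict_Icc]
    filter_upwards [hzero] with t ht
    have hyt : y t = 0 := by
      by_contra hne
      have := norm_pos_iff.2 hne
      exact (hAα (y t)).not_gt (ht.trans_lt (by positivity))
    simp [hyt]
  refine Measure.eqOn_Icc_of_ae_eq volume hT.ne hae (.congr ?_ hy) continuousOn_const ht
  rw [← uIcc_of_le hT.le]
  exact (absolutelyContinuousOnInterval_intervalIntegral hg left_mem_uIcc).continuousOn

section Viscous

variable {Z V : Type*} [NormedAddCommGroup Z] [NormedSpace ℝ Z] [NormedAddCommGroup V]
  [NormedSpace ℝ V]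

/-- The inclusion `0 ∈ ∂ρ(v) + B v + A z + N z - ℓ` for a state `z` in `Z` with velocity `v` in `V`.
As `A z + N z` need not act on `v : V`, it does so through an extension `ξ` to `V`; the
subdifferential is tested with elements of `Z` only. -/
def SolvesViscousInclusion (i : Z →L[ℝ] V) (A : Z →L[ℝ] Z →L[ℝ] ℝ) (B : V →L[ℝ] V →L[ℝ] ℝ)
    (ρ : V → ℝ) (N : Z → V →L[ℝ] ℝ) (ℓ : V →L[ℝ] ℝ) (z : Z) (v : V) : Prop :=
  ∃ ξ : V →L[ℝ] ℝ, (∀ w, ξ (i w) = A z w + N z (i w)) ∧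
    ∀ w, ρ (i w) ≥ ρ v + (ℓ (i w - v) - B v (i w - v) - ξ (i w - v))

/-- A curve `z` with velocity `v`, essentially bounded in `Z` and absolutely continuous in `V` on
`[0, T]`, that satisfies the viscous inclusion with load `ℓ t` at almost every time `t`. -/
structure IsViscousSolutionOn (i : Z →L[ℝ] V) (A : Z →L[ℝ] Z →L[ℝ] ℝ) (B : V →L[ℝ] V →L[ℝ] ℝ)
    (ρ : V → ℝ) (N : Z → V →L[ℝ] ℝ) (ℓ : ℝ → V →L[ℝ] ℝ) (T : ℝ) (z : ℝ → Z) (v : ℝ → V) :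
    Prop where
  exists_bound : ∃ M, ∀ᵐ t ∂volume.restrict (Ioc 0 T), ‖z t‖ ≤ M
  intervalIntegrable : IntervalIntegrable v volume 0 T
  eq_integral : ∀ t ∈ Icc 0 T, i (z t) = i (z 0) + ∫ s in 0..t, v s
  inclusion : ∀ᵐ t ∂volume.restrict (Ioc 0 T), SolvesViscousInclusion i A B ρ N (ℓ t) (z t) (v t)

variable {i : Z →L[ℝ] V} {A : Z →L[ℝ] Z →L[ℝ] ℝ} {B : V →L[ℝ] V →L[ℝ] ℝ} {ρ : V → ℝ}
  {N : Z → V →L[ℝ] ℝ}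

namespace SolvesViscousInclusion

variable {ℓ : V →L[ℝ] ℝ}

theorem exists_dual (hρ : Continuous ρ) (hom : ∀ t : ℝ, 0 ≤ t → ∀ v, ρ (t • v) = t * ρ v)
    {z : Z} {v : V} (h : SolvesViscousInclusion i A B ρ N ℓ z v)
    (hv : v ∈ i.range.topologicalClosure) :
    ∃ η : V →L[ℝ] ℝ, (∀ w, η (i w) = ℓ (i w) - B v (i w) - A z w - N z (i w)) ∧
      η v = ρ v ∧ ∀ u ∈ i.range.topologicalClosure, η u ≤ ρ u := by
  obtain ⟨ξ, hξ, hle⟩ := h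
  refine ⟨ℓ - B v - ξ, fun w ↦ ?_, eq_and_le_of_subgradient hom hv fun u hu ↦ ?_⟩
  · simp only [sub_apply, hξ]
    ring
  · have hclosed : IsClosed {u | ρ v + (ℓ - B v - ξ) (u - v) ≤ ρ u} :=
      isClosed_le (by fun_prop) hρ
    refine closure_minimal ?_ hclosed hu
    rintro _ ⟨w, rfl⟩
    exact hle w

theorem hasPowerBound_sub (hρ : Continuous ρ)
    (hom : ∀ t : ℝ, 0 ≤ t → ∀ v, ρ (t • v) = t * ρ v) {c γ : ℝ} (hc : ∀ v, ρ v ≤ c * ‖v‖)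
    (hγ : 0 < γ) (hB : ∀ v, γ * ‖v‖ * ‖v‖ ≤ B v v) {z₁ z₂ : Z} {v₁ v₂ : V}
    (h₁ : SolvesViscousInclusion i A B ρ N ℓ z₁ v₁) (h₂ : SolvesViscousInclusion i A B ρ N ℓ z₂ v₂)
    (hv₁ : v₁ ∈ i.range.topologicalClosure) (hv₂ : v₂ ∈ i.range.topologicalClosure) :
    HasPowerBound i A B (2 * c + ‖N z₁ - N z₂‖) (‖N z₁ - N z₂‖ ^ 2 / (4 * γ))
      (z₁ - z₂) (v₁ - v₂) := by
  obtain ⟨η₁, hη₁, heq₁, hle₁⟩ := h₁.exists_dual hρ hom hv₁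
  obtain ⟨η₂, hη₂, heq₂, hle₂⟩ := h₂.exists_dual hρ hom hv₂
  have hN : ∀ u, -(N z₁ - N z₂) u ≤ ‖N z₁ - N z₂‖ * ‖u‖ := fun u ↦
    (neg_le_abs _).trans ((N z₁ - N z₂).le_opNorm u)
  refine ⟨-(η₁ - η₂) - B (v₁ - v₂) - (N z₁ - N z₂), fun w ↦ ?_, fun w ↦ ?_, ?_⟩
  · simp only [sub_apply, neg_apply, map_sub, hη₁, hη₂]
    ring
  · have hw₁ : -η₁ (i w) ≤ c * ‖i w‖ := by
      simpa using (hle₁ _ (i.range.le_topologicalClosure ⟨-w, rfl⟩)).trans (hc _)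
    have hw₂ : η₂ (i w) ≤ c * ‖i w‖ :=
      (hle₂ _ (i.range.le_topologicalClosure ⟨w, rfl⟩)).trans (hc _)
    have hNw := hN (i w)
    simp only [sub_apply, map_sub] at hNw ⊢
    linarith [hη₁ w, hη₂ w]
  · have hmono : 0 ≤ (η₁ - η₂) (v₁ - v₂) := by
      simp only [sub_apply, map_sub]
      linarith [hle₁ v₂ hv₂, hle₂ v₁ hv₁]
    calc (-(η₁ - η₂) - B (v₁ - v₂) - (N z₁ - N z₂)) (v₁ - v₂)
        = -(η₁ - η₂) (v₁ - v₂) - B (v₁ - v₂) (v₁ - v₂) - (N z₁ - N z₂) (v₁ - v₂) := rfl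
      _ ≤ ‖N z₁ - N z₂‖ * ‖v₁ - v₂‖ - γ * ‖v₁ - v₂‖ ^ 2 := by
          linarith [hN (v₁ - v₂), hB (v₁ - v₂)]
      _ ≤ ‖N z₁ - N z₂‖ ^ 2 / (4 * γ) := mul_sub_mul_sq_le hγ _ _

end SolvesViscousInclusion

namespace IsViscousSolutionOn

variable {ℓ : ℝ → V →L[ℝ] ℝ} {T : ℝ} {z z₁ z₂ : ℝ → Z} {v v₁ v₂ : ℝ → V}

theorem ae_mem_topologicalClosure_range [CompleteSpace V]
    (h : IsViscousSolutionOn i A B ρ N ℓ T z v) :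
    ∀ᵐ t ∂volume.restrict (Ioc 0 T), v t ∈ i.range.topologicalClosure :=
  ae_mem_of_intervalIntegral_mem i.range.isClosed_topologicalClosure h.intervalIntegrable
    fun t ht ↦ i.range.le_topologicalClosure ⟨z t - z 0, by simp [h.eq_integral t ht]⟩

theorem exists_ae_hasPowerBound_sub [CompleteSpace V] (hA : IsCoercive A) (hB : IsCoercive B)
    (hρ : Continuous ρ) (hom : ∀ t : ℝ, 0 ≤ t → ∀ v, ρ (t • v) = t * ρ v)
    (hN : ∀ M, ∃ L, LipschitzOnWith L N (Metric.closedBall 0 M))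
    (h₁ : IsViscousSolutionOn i A B ρ N ℓ T z₁ v₁) (h₂ : IsViscousSolutionOn i A B ρ N ℓ T z₂ v₂) :
    ∃ D κ, ∀ᵐ t ∂volume.restrict (Ioc 0 T), HasPowerBound i A B D
      (κ * A (z₁ t - z₂ t) (z₁ t - z₂ t)) (z₁ t - z₂ t) (v₁ t - v₂ t) := by
  obtain ⟨α, hα, hA⟩ := hA
  obtain ⟨γ, hγ, hB⟩ := hB
  obtain ⟨c, hc⟩ := exists_forall_le_mul_norm hρ.continuousAt hom
  obtain ⟨M₁, hM₁⟩ := h₁.exists_bound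
  obtain ⟨M₂, hM₂⟩ := h₂.exists_bound
  obtain ⟨L, hL⟩ := hN (max M₁ M₂)
  refine ⟨2 * c + L * (M₁ + M₂), L ^ 2 / (4 * γ * α), ?_⟩
  filter_upwards [h₁.inclusion, h₂.inclusion, h₁.ae_mem_topologicalClosure_range,
    h₂.ae_mem_topologicalClosure_range, hM₁, hM₂] with t hi₁ hi₂ hv₁ hv₂ hz₁ hz₂
  have hlip : ‖N (z₁ t) - N (z₂ t)‖ ≤ L * ‖z₁ t - z₂ t‖ :=
    hL.norm_sub_le (mem_closedBall_zero_iff.2 (hz₁.trans (le_max_left _ _)))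
      (mem_closedBall_zero_iff.2 (hz₂.trans (le_max_right _ _)))
  refine (hi₁.hasPowerBound_sub hρ hom hc hγ hB hi₂ hv₁ hv₂).mono ?_ ?_
  · gcongr
    exact hlip.trans (by gcongr; exact norm_sub_le_of_le hz₁ hz₂)
  · calc ‖N (z₁ t) - N (z₂ t)‖ ^ 2 / (4 * γ) ≤ (L * ‖z₁ t - z₂ t‖) ^ 2 / (4 * γ) := by gcongr
      _ = L ^ 2 / (4 * γ * α) * (α * ‖z₁ t - z₂ t‖ * ‖z₁ t - z₂ t‖) := by field_simp
      _ ≤ L ^ 2 / (4 * γ * α) * A (z₁ t - z₂ t) (z₁ t - z₂ t) := by gcongr; exact hA _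

theorem of_halfLine (hbd : ∃ M, ∀ᵐ t, 0 ≤ t → ‖z t‖ ≤ M)
    (hint : ∀ a > 0, IntegrableOn v (Ioc 0 a))
    (heq : ∀ t ≥ 0, i (z t) = i (z 0) + ∫ s in Ioc 0 t, v s)
    (hsol : ∀ᵐ t, 0 < t → SolvesViscousInclusion i A B ρ N (ℓ t) (z t) (v t)) (hT : 0 ≤ T) :
    IsViscousSolutionOn i A B ρ N ℓ T z v where
  exists_bound := by
    obtain ⟨M, hM⟩ := hbd
    exact ⟨M, (ae_restrict_iff' measurableSet_Ioc).2 (hM.mono fun t h ht ↦ h ht.1.le)⟩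
  intervalIntegrable := by
    rcases hT.eq_or_lt with rfl | hT
    · exact .refl
    · exact (intervalIntegrable_iff_integrableOn_Ioc_of_le hT.le).2 (hint T hT)
  eq_integral t ht := by rw [heq t ht.1, intervalIntegral.integral_of_le ht.1]
  inclusion := (ae_restrict_iff' measurableSet_Ioc).2 (hsol.mono fun t h ht ↦ h ht.1)

end IsViscousSolutionOn

end Viscous

theorem stmt3_general {Z V : Type*} [NormedAddCommGroup Z] [InnerProductSpace ℝ Z]
    [CompleteSpace Z] [NormedAddCommGroup V] [NormedSpace ℝ V] [CompleteSpace V] {i : Z →L[ℝ] V}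
    {A : Z →L[ℝ] Z →L[ℝ] ℝ} (hA : ∀ z w, A z w = A w z) (hA' : IsCoercive A)
    {B : V →L[ℝ] V →L[ℝ] ℝ} (hB : ∀ u v, B u v = B v u) (hB' : IsCoercive B)
    {ρ : V → ℝ} (hρ : Continuous ρ) (hom : ∀ t : ℝ, 0 ≤ t → ∀ v, ρ (t • v) = t * ρ v)
    {N : Z → V →L[ℝ] ℝ} (hN : ∀ M, ∃ L, LipschitzOnWith L N (Metric.closedBall 0 M))
    {ℓ : ℝ → V →L[ℝ] ℝ} {T : ℝ} {z₁ z₂ : ℝ → Z} {v₁ v₂ : ℝ → V}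
    (h₁ : IsViscousSolutionOn i A B ρ N ℓ T z₁ v₁) (h₂ : IsViscousSolutionOn i A B ρ N ℓ T z₂ v₂)
    (h₀ : i (z₁ 0) = i (z₂ 0)) : ∀ t ∈ Icc 0 T, i (z₁ t) = i (z₂ t) := by
  obtain ⟨D, κ, hpow⟩ := h₁.exists_ae_hasPowerBound_sub hA' hB' hρ hom hN h₂
  obtain ⟨M₁, hM₁⟩ := h₁.exists_bound
  obtain ⟨M₂, hM₂⟩ := h₂.exists_bound
  have hbdd : ∃ M, ∀ᵐ t ∂volume.restrict (Ioc 0 T), ‖z₁ t - z₂ t‖ ≤ M :=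
    ⟨M₁ + M₂, by filter_upwards [hM₁, hM₂] with t ht₁ ht₂ using norm_sub_le_of_le ht₁ ht₂⟩
  have heq : ∀ t ∈ Icc 0 T, i (z₁ t - z₂ t) = ∫ s in 0..t, (v₁ s - v₂ s) := fun t ht ↦ by
    have hsub : uIcc 0 t ⊆ uIcc 0 T := uIcc_subset_uIcc_left (Icc_subset_uIcc ht)
    rw [map_sub, h₁.eq_integral t ht, h₂.eq_integral t ht, h₀, add_sub_add_left_eq_sub,
      intervalIntegral.integral_sub (h₁.intervalIntegrable.mono_set hsub)
        (h₂.intervalIntegrable.mono_set hsub)]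
  have hzero := eqOn_zero_of_hasPowerBound hA hA' hB hB'
    (h₁.intervalIntegrable.sub h₂.intervalIntegrable) heq hbdd hpow
  exact fun t ht ↦ sub_eq_zero.1 ((map_sub i _ _).symm.trans (hzero ht))

/-- Uniqueness for the autonomous viscous system
`0 ∈ ∂R(ż) + 𝕍ż + DI(z) − ℓ*` on `ℝ₊` (Theorem `thm.viscRplusexregest`(1) of
the paper).  Two solutions that are essentially bounded in `Z`, absolutely
continuous into `V` on bounded intervals with derivative in `L¹`, start at the
same initial datum `z₀` and satisfy the subdifferential inclusion a.e.,
coincide.  The inclusion at time `t` states that the derivative `ż(t)` in `V`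
exists and `R(w) ≥ R(ż(t)) + ⟨ℓ* − 𝕍ż(t) − DI(z(t)), w − ż(t)⟩` for all
`w ∈ Z`, where `DI(z(t)) = A z(t) + DF(z(t))` acts through a `V*`-extension
`ξ`. -/
theorem stmt3
    {Z V X : Type*}
    [NormedAddCommGroup Z] [InnerProductSpace ℝ Z] [CompleteSpace Z]
    [TopologicalSpace.SeparableSpace Z]
    [NormedAddCommGroup V] [InnerProductSpace ℝ V] [CompleteSpace V]
    [TopologicalSpace.SeparableSpace V]
    [NormedAddCommGroup X] [NormedSpace ℝ X]
    (jZV : Z →L[ℝ] V) (hjZV_inj : Function.Injective jZV)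
    (hjZV_cpt : IsCompactOperator jZV)
    (jVX : V →L[ℝ] X) (hjVX_inj : Function.Injective jVX)
    (A : Z →L[ℝ] Z →L[ℝ] ℝ) (hA_symm : ∀ z w : Z, A z w = A w z)
    (α : ℝ) (hα : 0 < α) (hA_ell : ∀ z : Z, α * ‖z‖ ^ 2 ≤ A z z)
    (VV : V →L[ℝ] V →L[ℝ] ℝ) (hVV_symm : ∀ u v : V, VV u v = VV v u)
    (γ : ℝ) (hγ : 0 < γ) (hVV_ell : ∀ v : V, γ * ‖v‖ ^ 2 ≤ VV v v)
    (R : X → ℝ) (hR_conv : ConvexOn ℝ Set.univ R) (hR_cont : Continuous R)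
    (hR_hom : ∀ t : ℝ, 0 ≤ t → ∀ x : X, R (t • x) = t * R x)
    (c C : ℝ) (hc : 0 < c) (hC : 0 < C)
    (hR_low : ∀ x : X, c * ‖x‖ ≤ R x) (hR_up : ∀ x : X, R x ≤ C * ‖x‖)
    (F : Z → ℝ) (hF_nonneg : ∀ z : Z, 0 ≤ F z)
    (DF : Z → V →L[ℝ] ℝ)
    (hDF : ∀ z : Z, HasFDerivAt F ((DF z).comp jZV) z)
    (D2F : Z → Z →L[ℝ] V →L[ℝ] ℝ)
    (hD2F : ∀ z : Z, HasFDerivAt DF (D2F z) z)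
    (hD2F_cont : Continuous D2F)
    (C₀ q : ℝ) (hC₀ : 0 < C₀) (hq : 1 ≤ q)
    (hD2F_bound : ∀ z v : Z, ‖D2F z v‖ ≤ C₀ * (1 + ‖z‖ ^ q) * ‖v‖)
    -- data
    (lstar : V →L[ℝ] ℝ) (z₀ : Z)
    -- the two solutions and their derivatives
    (z₁ z₂ : ℝ → Z) (zd₁ zd₂ : ℝ → V)
    -- essential boundedness with values in Z
    (hbd₁ : ∃ M : ℝ, ∀ᵐ t : ℝ ∂volume, 0 ≤ t → ‖z₁ t‖ ≤ M)
    (hbd₂ : ∃ M : ℝ, ∀ᵐ t : ℝ ∂volume, 0 ≤ t → ‖z₂ t‖ ≤ M)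
    -- derivatives belong to L¹((0,a);V) for every a > 0
    (hint₁ : ∀ a > (0:ℝ), IntegrableOn zd₁ (Set.Ioc 0 a) volume)
    (hint₂ : ∀ a > (0:ℝ), IntegrableOn zd₂ (Set.Ioc 0 a) volume)
    -- absolute continuity into V
    (hAC₁ : ∀ t ≥ (0:ℝ), jZV (z₁ t) = jZV (z₁ 0) + ∫ r in Set.Ioc 0 t, zd₁ r)
    (hAC₂ : ∀ t ≥ (0:ℝ), jZV (z₂ t) = jZV (z₂ 0) + ∫ r in Set.Ioc 0 t, zd₂ r)
    -- initial conditions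
    (hini₁ : z₁ 0 = z₀) (hini₂ : z₂ 0 = z₀)
    -- the viscous inclusion holds a.e. on (0,∞)
    (hsol₁ : ∀ᵐ t : ℝ ∂volume, 0 < t →
      HasDerivAt (fun τ => jZV (z₁ τ)) (zd₁ t) t ∧
      ∃ ξ : V →L[ℝ] ℝ,
        (∀ w : Z, ξ (jZV w) = A (z₁ t) w + DF (z₁ t) (jZV w)) ∧
        ∀ w : Z, R (jVX (jZV w)) ≥ R (jVX (zd₁ t)) +
          (lstar (jZV w - zd₁ t) - VV (zd₁ t) (jZV w - zd₁ t)
            - ξ (jZV w - zd₁ t)))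
    (hsol₂ : ∀ᵐ t : ℝ ∂volume, 0 < t →
      HasDerivAt (fun τ => jZV (z₂ τ)) (zd₂ t) t ∧
      ∃ ξ : V →L[ℝ] ℝ,
        (∀ w : Z, ξ (jZV w) = A (z₂ t) w + DF (z₂ t) (jZV w)) ∧
        ∀ w : Z, R (jVX (jZV w)) ≥ R (jVX (zd₂ t)) +
          (lstar (jZV w - zd₂ t) - VV (zd₂ t) (jZV w - zd₂ t)
            - ξ (jZV w - zd₂ t))) :
    ∀ t ≥ (0:ℝ), z₁ t = z₂ t :=
  fun t ht ↦ hjZV_inj <| stmt3_general hA_symm (isCoercive_of_mul_sq_norm_le hα hA_ell)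
    hVV_symm (isCoercive_of_mul_sq_norm_le hγ hVV_ell)
    (ρ := fun v ↦ R (jVX v)) (hR_cont.comp jVX.continuous)
    (fun s hs v ↦ by rw [map_smul, hR_hom s hs])
    (exists_lipschitzOnWith_closedBall_of_rpow_growth hD2F hC₀.le (zero_le_one.trans hq) hD2F_bound)
    (.of_halfLine (ℓ := fun _ ↦ lstar) hbd₁ hint₁ hAC₁ (hsol₁.mono fun _ h ht ↦ (h ht).2) ht)
    (.of_halfLine hbd₂ hint₂ hAC₂ (hsol₂.mono fun _ h ht ↦ (h ht).2) ht)
    (congrArg jZV (hini₁.trans hini₂.symm)) t (right_mem_Icc.2 ht)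
end
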